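/- Let W ⊂ ℝ^d be a measurable set of finite Lebesgue measure, let y : W → ℝ^p be a bounded measurable map, and let θ > 0. If the p×p matrix ∫_W y(s) y(s)^⊤ ds is positive definite, then the function G : ℝ^p → ℝ defined by G(ψ) = θ ∫_W exp(⟨ψ, y(s)⟩) ds is strictly convex on ℝ^p; consequently, for any finite set x ⊂ W and c ∈ ℝ, the Poisson log-likelihood ℓ(ψ) = Σ_{s∈x} (c + ⟨ψ, y(s)⟩) − G(ψ) is strictly concave and has at most one maximizer. -/

import Mathlib

open MeasureTheory
open scoped RealInnerProductSpace

/-!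
By strict convexity of `exp`, for each `s` the integrand `ψ ↦ exp ⟪ψ, y s⟫` is convex, and the
convexity inequality between `u` and `v` is strict at every `s` with `⟪u - v, y s⟫ ≠ 0`. The
quadratic form of the second moment matrix is `w ↦ ∫ ⟪w, y s⟫ ^ 2`, so positive definiteness means
that, for `u ≠ v`, these `s` form a set of positive measure, and the strict inequality survives
integration. The log-likelihood is an affine function minus this strictly convex one.
-/

section IntegralConvexity

variable {Ω E : Type*} [MeasurableSpace Ω] {μ : Measure Ω}

theorem integral_lt_integral_of_ae_le_of_frequently_lt {f g : Ω → ℝ} (hf : Integrable f μ)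
    (hg : Integrable g μ) (hle : f ≤ᵐ[μ] g) (hlt : ∃ᵐ ω ∂μ, f ω < g ω) :
    ∫ ω, f ω ∂μ < ∫ ω, g ω ∂μ :=
  (integral_mono_ae hf hg hle).lt_of_ne fun heq =>
    hlt <| ((integral_eq_iff_of_ae_le hf hg hle).1 heq).mono fun _ hω => hω.not_lt

theorem strictConvexOn_integral [AddCommMonoid E] [Module ℝ E] {K : Set E} {f : Ω → E → ℝ}
    (hK : Convex ℝ K) (hf : ∀ᵐ ω ∂μ, ConvexOn ℝ K (f ω)) (hint : ∀ u ∈ K, Integrable (f · u) μ)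
    (hlt : ∀ u ∈ K, ∀ v ∈ K, u ≠ v → ∀ a b : ℝ, 0 < a → 0 < b → a + b = 1 →
      ∃ᵐ ω ∂μ, f ω (a • u + b • v) < a • f ω u + b • f ω v) :
    StrictConvexOn ℝ K fun u => ∫ ω, f ω u ∂μ := by
  refine ⟨hK, fun u hu v hv huv a b ha hb hab => ?_⟩
  have hint_u : Integrable (fun ω => a • f ω u) μ := (hint u hu).smul a
  have hint_v : Integrable (fun ω => b • f ω v) μ := (hint v hv).smul b
  calc ∫ ω, f ω (a • u + b • v) ∂μ
      < ∫ ω, (a • f ω u + b • f ω v) ∂μ :=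
        integral_lt_integral_of_ae_le_of_frequently_lt (hint _ (hK hu hv ha.le hb.le hab))
          (hint_u.add hint_v) (hf.mono fun ω hω => hω.2 hu hv ha.le hb.le hab)
          (hlt u hu v hv huv a b ha hb hab)
    _ = a • ∫ ω, f ω u ∂μ + b • ∫ ω, f ω v ∂μ := by
        rw [integral_add hint_u hint_v, integral_smul, integral_smul]

theorem strictConvexOn_integral_comp_linearMap [AddCommGroup E] [Module ℝ E] {φ : ℝ → ℝ}
    (hφ : StrictConvexOn ℝ Set.univ φ) {L : Ω → E →ₗ[ℝ] ℝ}
    (hint : ∀ u, Integrable (fun ω => φ (L ω u)) μ) (hL : ∀ w ≠ 0, ∃ᵐ ω ∂μ, L ω w ≠ 0) :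
    StrictConvexOn ℝ Set.univ fun u => ∫ ω, φ (L ω u) ∂μ := by
  refine strictConvexOn_integral convex_univ
    (.of_forall fun ω => hφ.convexOn.comp_linearMap (L ω)) (fun u _ => hint u)
    fun u _ v _ huv a b ha hb hab => (hL (u - v) (sub_ne_zero.2 huv)).mono fun ω hω => ?_
  have hne : L ω u ≠ L ω v := by rwa [map_sub, sub_ne_zero] at hω
  simpa only [map_add, map_smul] using
    hφ.2 (Set.mem_univ (L ω u)) (Set.mem_univ (L ω v)) hne ha hb hab

end IntegralConvexity

section Convexity

variable {E : Type*} [AddCommMonoid E] [Module ℝ E] {K : Set E}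

theorem strictConvexOn_const_mul {f : E → ℝ} {c : ℝ} (hc : 0 < c) (hf : StrictConvexOn ℝ K f) :
    StrictConvexOn ℝ K fun u => c * f u := by
  refine ⟨hf.1, fun u hu v hv huv a b ha hb hab => ?_⟩
  calc c * f (a • u + b • v) < c * (a • f u + b • f v) := by
        gcongr
        exact hf.2 hu hv huv ha hb hab
    _ = a • (c * f u) + b • (c * f v) := by simp only [smul_eq_mul]; ring

theorem concaveOn_sum_const_add_linearMap {α : Type*} (hK : Convex ℝ K) (x : Finset α)
    (c : α → ℝ) (L : α → E →ₗ[ℝ] ℝ) : ConcaveOn ℝ K fun u => ∑ s ∈ x, (c s + L s u) := by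
  have hsum : (fun u => ∑ s ∈ x, (c s + L s u)) = fun u => (∑ s ∈ x, L s) u + ∑ s ∈ x, c s := by
    ext u
    rw [LinearMap.sum_apply, Finset.sum_add_distrib, add_comm]
  rw [hsum]
  exact ((∑ s ∈ x, L s).concaveOn hK).add_const _

end Convexity

section ExponentialIntegrability

variable {Ω : Type*} [MeasurableSpace Ω] {μ : Measure Ω}

theorem integrable_exp_inner_of_norm_le {E : Type*} [NormedAddCommGroup E] [InnerProductSpace ℝ E]
    [IsFiniteMeasure μ] {y : Ω → E} (hy : AEStronglyMeasurable y μ) {M : ℝ}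
    (hM : ∀ᵐ s ∂μ, ‖y s‖ ≤ M) (ψ : E) : Integrable (fun s => Real.exp ⟪ψ, y s⟫) μ := by
  have hinner : ∀ᵐ s ∂μ, ⟪ψ, y s⟫ ≤ ‖ψ‖ * M := by
    filter_upwards [hM] with s hs
    exact (real_inner_le_norm ψ (y s)).trans (by gcongr)
  simpa only [one_mul] using ProbabilityTheory.integrable_exp_mul_of_le 1 (‖ψ‖ * M) zero_le_one
    (hy.const_inner (𝕜 := ℝ)).aemeasurable hinner

theorem memLp_of_integrable_exp_inner {ι : Type*} [Fintype ι] {y : Ω → EuclideanSpace ℝ ι}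
    (hint : ∀ ψ, Integrable (fun s => Real.exp ⟪ψ, y s⟫) μ) (p : NNReal) : MemLp y p μ := by
  classical
  refine .of_eval_piLp fun i => ?_
  have huniv : ProbabilityTheory.integrableExpSet (fun s => y s i) μ = Set.univ :=
    Set.eq_univ_of_forall fun t => by
      simpa [ProbabilityTheory.integrableExpSet, EuclideanSpace.inner_single_left] using
        hint (EuclideanSpace.single i t)
  exact ProbabilityTheory.memLp_of_mem_interior_integrableExpSet (by simp [huniv]) p

end ExponentialIntegrability

section SecondMoment

variable {Ω ι : Type*} [MeasurableSpace Ω] {μ : Measure Ω} {y : Ω → EuclideanSpace ℝ ι}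

/-- The uncentred second moment matrix `∫ y(s) y(s)ᵀ dμ(s)` of a vector-valued function, with the
integral taken entrywise. -/
noncomputable def secondMomentMatrix (y : Ω → EuclideanSpace ℝ ι) (μ : Measure Ω) :
    Matrix ι ι ℝ :=
  Matrix.of fun i j => ∫ s, y s i * y s j ∂μ

variable [Fintype ι]

theorem dotProduct_secondMomentMatrix_mulVec (hy : MemLp y 2 μ) (w : EuclideanSpace ℝ ι) :
    w.ofLp ⬝ᵥ (secondMomentMatrix y μ).mulVec w.ofLp = ∫ s, ⟪w, y s⟫ ^ 2 ∂μ := by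
  have hint (i j : ι) : Integrable (fun s => y s i * y s j) μ :=
    (hy.eval_piLp i).integrable_mul (hy.eval_piLp j)
  calc w.ofLp ⬝ᵥ (secondMomentMatrix y μ).mulVec w.ofLp
      = ∑ i, ∑ j, ∫ s, w i * (y s i * y s j * w j) ∂μ := by
        simp only [dotProduct, Matrix.mulVec, secondMomentMatrix, Matrix.of_apply,
          Finset.mul_sum, integral_const_mul, integral_mul_const]
    _ = ∫ s, ∑ i, ∑ j, w i * (y s i * y s j * w j) ∂μ := by
        have hterm (i j : ι) : Integrable (fun s => w i * (y s i * y s j * w j)) μ :=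
          ((hint i j).mul_const _).const_mul _
        rw [integral_finsetSum _ fun i _ => integrable_finsetSum _ fun j _ => hterm i j]
        simp only [integral_finsetSum _ fun j _ => hterm _ j]
    _ = ∫ s, ⟪w, y s⟫ ^ 2 ∂μ := by
        simp only [PiLp.inner_apply, RCLike.inner_apply, conj_trivial, sq, Finset.sum_mul_sum]
        refine integral_congr_ae (.of_forall fun s => ?_)
        exact Finset.sum_congr rfl fun i _ => Finset.sum_congr rfl fun j _ => by ring

theorem frequently_inner_ne_zero_of_posDef (hy : MemLp y 2 μ)
    (hpd : (secondMomentMatrix y μ).PosDef) {w : EuclideanSpace ℝ ι} (hw : w ≠ 0) :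
    ∃ᵐ s ∂μ, ⟪w, y s⟫ ≠ 0 := by
  intro hzero
  have hpos : 0 < ∫ s, ⟪w, y s⟫ ^ 2 ∂μ := by
    rw [← dotProduct_secondMomentMatrix_mulVec hy w]
    exact hpd.dotProduct_mulVec_pos (by simpa using hw)
  refine hpos.ne' (integral_eq_zero_of_ae ?_)
  filter_upwards [hzero] with s hs
  simp [not_not.1 hs]

end SecondMoment

theorem poissonLogLik_strictConcave_general {Ω ι : Type*} [MeasurableSpace Ω] [Fintype ι]
    {μ : Measure Ω} {y : Ω → EuclideanSpace ℝ ι} {θ : ℝ} (hθ : 0 < θ)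
    (hint : ∀ ψ, Integrable (fun s => Real.exp ⟪ψ, y s⟫) μ)
    (hpd : (secondMomentMatrix y μ).PosDef) :
    StrictConvexOn ℝ Set.univ
        (fun ψ : EuclideanSpace ℝ ι => θ * ∫ s, Real.exp ⟪ψ, y s⟫ ∂μ) ∧
      ∀ (x : Finset Ω) (c : Ω → ℝ),
        StrictConcaveOn ℝ Set.univ
            (fun ψ : EuclideanSpace ℝ ι =>
              (∑ s ∈ x, (c s + ⟪ψ, y s⟫)) - θ * ∫ s, Real.exp ⟪ψ, y s⟫ ∂μ) ∧
          ∀ ψ₁ ψ₂ : EuclideanSpace ℝ ι,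
            IsMaxOn (fun ψ : EuclideanSpace ℝ ι =>
                (∑ s ∈ x, (c s + ⟪ψ, y s⟫)) - θ * ∫ s, Real.exp ⟪ψ, y s⟫ ∂μ) Set.univ ψ₁ →
            IsMaxOn (fun ψ : EuclideanSpace ℝ ι =>
                (∑ s ∈ x, (c s + ⟪ψ, y s⟫)) - θ * ∫ s, Real.exp ⟪ψ, y s⟫ ∂μ) Set.univ ψ₂ →
            ψ₁ = ψ₂ := by
  have hy : MemLp y 2 μ := memLp_of_integrable_exp_inner hint 2
  let L (s : Ω) : EuclideanSpace ℝ ι →ₗ[ℝ] ℝ := (innerₗ (EuclideanSpace ℝ ι)).flip (y s)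
  have hG : StrictConvexOn ℝ Set.univ
      (fun ψ : EuclideanSpace ℝ ι => θ * ∫ s, Real.exp ⟪ψ, y s⟫ ∂μ) :=
    strictConvexOn_const_mul hθ <| strictConvexOn_integral_comp_linearMap (L := L)
      strictConvexOn_exp hint fun _ hw => frequently_inner_ne_zero_of_posDef hy hpd hw
  refine ⟨hG, fun x c => ?_⟩
  have hℓ := (concaveOn_sum_const_add_linearMap convex_univ x c L).sub_strictConvexOn hG
  exact ⟨hℓ, fun ψ₁ ψ₂ h₁ h₂ => hℓ.eq_of_isMaxOn h₁ h₂ (Set.mem_univ _) (Set.mem_univ _)⟩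

/-- If `∫_W y(s) y(s)ᵀ ds` is positive definite, then `G(ψ) = θ ∫_W exp(⟨ψ, y(s)⟩) ds` is
strictly convex; consequently the Poisson log-likelihood
`ℓ(ψ) = Σ_{s∈x} (c + ⟨ψ, y(s)⟩) − G(ψ)` is strictly concave and has at most one maximizer. -/
theorem poissonLogLik_strictConcave {d p : ℕ} (W : Set (Fin d → ℝ))
    (hW : MeasurableSet W) (hWfin : volume W < ⊤)
    (y : (Fin d → ℝ) → EuclideanSpace ℝ (Fin p)) (hy : Measurable y)
    (M : ℝ) (hM : ∀ s ∈ W, ‖y s‖ ≤ M)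
    (θ : ℝ) (hθ : 0 < θ)
    (hpd : (Matrix.of fun i j => ∫ s in W, y s i * y s j : Matrix (Fin p) (Fin p) ℝ).PosDef) :
    StrictConvexOn ℝ Set.univ
        (fun ψ : EuclideanSpace ℝ (Fin p) => θ * ∫ s in W, Real.exp (⟪ψ, y s⟫)) ∧
      ∀ (x : Finset (Fin d → ℝ)), ↑x ⊆ W → ∀ c : ℝ,
        StrictConcaveOn ℝ Set.univ
            (fun ψ : EuclideanSpace ℝ (Fin p) =>
              (∑ s ∈ x, (c + ⟪ψ, y s⟫)) - θ * ∫ s in W, Real.exp (⟪ψ, y s⟫)) ∧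
          ∀ ψ₁ ψ₂ : EuclideanSpace ℝ (Fin p),
            IsMaxOn (fun ψ : EuclideanSpace ℝ (Fin p) =>
                (∑ s ∈ x, (c + ⟪ψ, y s⟫)) - θ * ∫ s in W, Real.exp (⟪ψ, y s⟫)) Set.univ ψ₁ →
            IsMaxOn (fun ψ : EuclideanSpace ℝ (Fin p) =>
                (∑ s ∈ x, (c + ⟪ψ, y s⟫)) - θ * ∫ s in W, Real.exp (⟪ψ, y s⟫)) Set.univ ψ₂ →
            ψ₁ = ψ₂ := by
  have : IsFiniteMeasure (volume.restrict W) := isFiniteMeasure_restrict.2 hWfin.ne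
  have ⟨hG, hℓ⟩ := poissonLogLik_strictConcave_general hθ (integrable_exp_inner_of_norm_le
    (μ := volume.restrict W) hy.aestronglyMeasurable (ae_restrict_of_forall_mem hW hM)) hpd
  exact ⟨hG, fun x _ c => hℓ x fun _ => c⟩
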